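/- For every real d ≥ 22, let μ* be the unique zero of h_d in (0, (3−√5)/2]. Then the function g_d(μ) = √(1/μ − 1/(1−μ)) + √(d/(1−μ)) is strictly decreasing on (0, μ*] and strictly increasing on [μ*, (3−√5)/2]; in particular, μ* is the unique minimizer of g_d on (0, (3−√5)/2]. (From the proof of Theorem 2: the optimal adjustment parameter for d ≥ 22.) -/

import Mathlib

/-!
With `P = 1 - 2μ + 2μ²` one has `h_d(μ) = P² - d μ³ (1 - 2μ)`, and for `μ ∈ (0, 1/2)` clearing the
square roots in `g_d'(μ)` shows that it is negative exactly where `P² > d μ³ (1 - 2μ)`, that is,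
where `h_d(μ) > 0` (`gfun_deriv_neg`, `gfun_deriv_pos`).

On `(0, 3/8]` the function `P²` strictly decreases and `μ³ (1 - 2μ)` strictly increases, so `h_d`
strictly decreases (`hquartic_lt`). On `[3/8, (3 - √5)/2]` a direct estimate gives `h_d < 0` for
`d ≥ 22` (`hquartic_neg`). Hence `μ* < 3/8`, and `h_d` is positive to the left of `μ*` and negative
to its right.
-/

/-- The quartic `h_d(μ) = (2d+4)μ⁴ - (d+8)μ³ + 8μ² - 4μ + 1` governing the sign of
the derivative of the approximation-ratio function `g_d`. -/
def hquartic (d μ : ℝ) : ℝ :=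
  (2 * d + 4) * μ ^ 4 - (d + 8) * μ ^ 3 + 8 * μ ^ 2 - 4 * μ + 1

/-- The approximation-ratio function
`g_d(μ) = √(1/μ - 1/(1-μ)) + √(d/(1-μ))`. -/
noncomputable def gfun (d μ : ℝ) : ℝ :=
  Real.sqrt (1 / μ - 1 / (1 - μ)) + Real.sqrt (d / (1 - μ))

theorem hquartic_eq (d μ : ℝ) :
    hquartic d μ = (1 - 2 * μ + 2 * μ ^ 2) ^ 2 - d * (μ ^ 3 * (1 - 2 * μ)) := by
  unfold hquartic; ring

theorem hquartic_lt {d a b : ℝ} (hd : 0 < d) (ha : 0 < a) (hab : a < b) (hb : b ≤ 3 / 8) :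
    hquartic d b < hquartic d a := by
  rw [hquartic_eq, hquartic_eq]
  have hP : 1 - 2 * b + 2 * b ^ 2 < 1 - 2 * a + 2 * a ^ 2 := by nlinarith
  have hP0 : 0 < 1 - 2 * b + 2 * b ^ 2 := by nlinarith [sq_nonneg b]
  have hP2 : (1 - 2 * b + 2 * b ^ 2) ^ 2 < (1 - 2 * a + 2 * a ^ 2) ^ 2 := by gcongr
  have hk : a ^ 3 * (1 - 2 * a) < b ^ 3 * (1 - 2 * b) := by
    have hb0 : 0 < b := ha.trans hab
    -- The divided difference `(k b - k a) / (b - a)` of `k μ = μ³ (1 - 2μ)`.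
    have h1 : 0 < a ^ 2 + a * b + b ^ 2 - 2 * (a + b) * (a ^ 2 + b ^ 2) := by
      nlinarith [mul_pos ha hb0, sq_nonneg (a - b)]
    have h2 := mul_pos (sub_pos.2 hab) h1
    nlinarith [h2]
  have := mul_lt_mul_of_pos_left hk hd
  linarith

/-- The bound `0.382` is slightly above `(3 - √5) / 2`, so this covers the part of the range of `μ`
to the right of `3 / 8`. -/
theorem hquartic_neg {d μ : ℝ} (hd : 22 ≤ d) (h1 : 3 / 8 ≤ μ) (h2 : μ ≤ 0.382) :
    hquartic d μ < 0 := by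
  rw [hquartic_eq]
  norm_num at h2
  have hP : (1 - 2 * μ + 2 * μ ^ 2) ^ 2 ≤ (17 / 32) ^ 2 := by
    have h0 : 0 ≤ 1 - 2 * μ + 2 * μ ^ 2 := by nlinarith [sq_nonneg μ]
    have h3 : 1 - 2 * μ + 2 * μ ^ 2 ≤ 17 / 32 := by nlinarith
    gcongr
  -- The constant works because `22 * 0.013 = 0.286` exceeds `(17 / 32) ^ 2 ≈ 0.2822`.
  have hk : 0.013 ≤ μ ^ 3 * (1 - 2 * μ) := by
    obtain ⟨t, rfl⟩ : ∃ t, μ = 3 / 8 + t := ⟨μ - 3 / 8, by ring⟩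
    have ht : 0 ≤ t := by linarith
    have ht' : t ≤ 7 / 1000 := by linarith
    norm_num
    nlinarith [mul_nonneg ht (sub_nonneg.2 ht'), pow_nonneg ht 3,
      mul_nonneg (pow_nonneg ht 3) (sub_nonneg.2 ht'),
      mul_nonneg (pow_nonneg ht 2) (sub_nonneg.2 ht')]
  norm_num at hk
  nlinarith

theorem sqrt_five_bound : (3 - Real.sqrt 5) / 2 ≤ 0.382 := by
  have : (2.236 : ℝ) ≤ Real.sqrt 5 := Real.le_sqrt_of_sq_le (by norm_num)
  norm_num at this ⊢
  linarith

theorem gfun_radicand_pos {μ : ℝ} (h0 : 0 < μ) (h1 : μ < 1 / 2) : 0 < 1 / μ - 1 / (1 - μ) :=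
  sub_pos.2 (one_div_lt_one_div_of_lt h0 (by linarith))

theorem gfun_hasDerivAt {d μ : ℝ} (hd : 0 < d) (h0 : 0 < μ) (h1 : μ < 1 / 2) :
    HasDerivAt (gfun d)
      (d / (1 - μ) ^ 2 / (2 * √(d / (1 - μ)))
        - (1 - 2 * μ + 2 * μ ^ 2) / (μ ^ 2 * (1 - μ) ^ 2) / (2 * √(1 / μ - 1 / (1 - μ)))) μ := by
  have hm : (0 : ℝ) < 1 - μ := by linarith
  have hA := gfun_radicand_pos h0 h1
  have hB : 0 < d / (1 - μ) := by positivity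
  have e : HasDerivAt (fun x : ℝ => 1 - x) (-1) μ := (hasDerivAt_id μ).const_sub 1
  have e1 := ((hasDerivAt_const μ (1 : ℝ)).fun_div (hasDerivAt_id μ) h0.ne').fun_sub
    ((hasDerivAt_const μ (1 : ℝ)).fun_div e hm.ne')
  have e2 := (hasDerivAt_const μ d).fun_div e hm.ne'
  have e3 := (e1.sqrt hA.ne').fun_add (e2.sqrt hB.ne')
  refine e3.congr_deriv ?_
  have hs : √(1 / μ - 1 / (1 - μ)) ≠ 0 := (Real.sqrt_pos.2 hA).ne'
  have ht : √(d / (1 - μ)) ≠ 0 := (Real.sqrt_pos.2 hB).ne'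
  simp only [id]
  generalize √(1 / μ - 1 / (1 - μ)) = s at *
  generalize √(d / (1 - μ)) = t at *
  field_simp
  ring

/-- Up to a positive factor, `h_d(μ)` is the difference of the squares of the two terms of
the derivative of `g_d` at `μ`. -/
theorem hquartic_eq_sq_sub_sq {d μ : ℝ} (hd : 0 < d) (h0 : 0 < μ) (h1 : μ < 1 / 2) :
    ((1 - 2 * μ + 2 * μ ^ 2) / (μ ^ 2 * (1 - μ) ^ 2) / (2 * √(1 / μ - 1 / (1 - μ)))) ^ 2
      - (d / (1 - μ) ^ 2 / (2 * √(d / (1 - μ)))) ^ 2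
      = hquartic d μ / (4 * μ ^ 3 * (1 - μ) ^ 3 * (1 - 2 * μ)) := by
  have hm : (0 : ℝ) < 1 - μ := by linarith
  have hn : (0 : ℝ) < 1 - 2 * μ := by linarith
  have hA := gfun_radicand_pos h0 h1
  have hB : 0 < d / (1 - μ) := by positivity
  have hA' : 1 / μ - 1 / (1 - μ) = (1 - 2 * μ) / (μ * (1 - μ)) := by field_simp; ring
  rw [div_pow _ (2 * _), div_pow _ (2 * _), mul_pow, mul_pow, Real.sq_sqrt hA.le,
    Real.sq_sqrt hB.le, hA', hquartic_eq]
  field_simp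
  ring

theorem gfun_deriv_neg {d μ : ℝ} (hd : 0 < d) (h0 : 0 < μ) (h1 : μ < 1 / 2)
    (h : 0 < hquartic d μ) : deriv (gfun d) μ < 0 := by
  rw [(gfun_hasDerivAt hd h0 h1).deriv, sub_neg]
  have hm : (0 : ℝ) < 1 - μ := by linarith
  have hn : (0 : ℝ) < 1 - 2 * μ := by linarith
  have hP : 0 < 1 - 2 * μ + 2 * μ ^ 2 := by positivity
  refine lt_of_pow_lt_pow_left₀ 2 (by positivity) (sub_pos.1 ?_)
  rw [hquartic_eq_sq_sub_sq hd h0 h1]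
  positivity

theorem gfun_deriv_pos {d μ : ℝ} (hd : 0 < d) (h0 : 0 < μ) (h1 : μ < 1 / 2)
    (h : hquartic d μ < 0) : 0 < deriv (gfun d) μ := by
  rw [(gfun_hasDerivAt hd h0 h1).deriv, sub_pos]
  have hm : (0 : ℝ) < 1 - μ := by linarith
  have hn : (0 : ℝ) < 1 - 2 * μ := by linarith
  refine lt_of_pow_lt_pow_left₀ 2 (by positivity) (sub_neg.1 ?_)
  rw [hquartic_eq_sq_sub_sq hd h0 h1]
  exact div_neg_of_neg_of_pos h (by positivity)

/-- **from the proof of Theorem 2.**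
For every real `d ≥ 22`, let `μ*` be the (unique) zero of `h_d` in
`(0, (3-√5)/2]`.  Then `g_d` is strictly decreasing on `(0, μ*]` and strictly
increasing on `[μ*, (3-√5)/2]`; in particular, `μ*` is the unique minimizer of
`g_d` on `(0, (3-√5)/2]`. -/
theorem gfun_minimizer (d : ℝ) (hd : 22 ≤ d)
    (μs : ℝ) (hμs : μs ∈ Set.Ioc (0 : ℝ) ((3 - Real.sqrt 5) / 2))
    (hzero : hquartic d μs = 0) :
    StrictAntiOn (gfun d) (Set.Ioc (0 : ℝ) μs) ∧
    StrictMonoOn (gfun d) (Set.Icc μs ((3 - Real.sqrt 5) / 2)) ∧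
    (∀ μ ∈ Set.Ioc (0 : ℝ) ((3 - Real.sqrt 5) / 2), μ ≠ μs →
      gfun d μs < gfun d μ) := by
  have hd0 : 0 < d := by linarith
  have hc := sqrt_five_bound
  have hc2 : (3 - Real.sqrt 5) / 2 < 1 / 2 := hc.trans_lt (by norm_num)
  obtain ⟨hs0, hsc⟩ := hμs
  have hs38 : μs < 3 / 8 := by
    by_contra! hcon
    exact (hquartic_neg hd hcon (hsc.trans hc)).ne hzero
  have hanti : StrictAntiOn (gfun d) (Set.Ioc (0 : ℝ) μs) := by
    refine strictAntiOn_of_deriv_neg (convex_Ioc 0 μs) (fun x hx => ?_) (fun x hx => ?_)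
    · exact (gfun_hasDerivAt hd0 hx.1
        (by linarith [hx.2])).continuousAt.continuousWithinAt
    · rw [interior_Ioc] at hx
      refine gfun_deriv_neg hd0 hx.1 (by linarith [hx.2]) ?_
      have := hquartic_lt hd0 hx.1 hx.2 hs38.le
      rwa [hzero] at this
  have hmono : StrictMonoOn (gfun d) (Set.Icc μs ((3 - Real.sqrt 5) / 2)) := by
    refine strictMonoOn_of_deriv_pos (convex_Icc _ _) (fun x hx => ?_) (fun x hx => ?_)
    · exact (gfun_hasDerivAt hd0 (hs0.trans_le hx.1)
        (hx.2.trans_lt hc2)).continuousAt.continuousWithinAt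
    · rw [interior_Icc] at hx
      refine gfun_deriv_pos hd0 (hs0.trans hx.1) (hx.2.trans hc2) ?_
      rcases le_total x (3 / 8) with h | h
      · have := hquartic_lt hd0 hs0 hx.1 h
        rwa [hzero] at this
      · exact hquartic_neg hd h (hx.2.le.trans hc)
  refine ⟨hanti, hmono, fun μ hμ hne => ?_⟩
  rcases lt_or_gt_of_ne hne with h | h
  · exact hanti ⟨hμ.1, h.le⟩ ⟨hs0, le_rfl⟩ h
  · exact hmono ⟨le_rfl, hsc⟩ ⟨h.le, hμ.2⟩ h
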